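/- Let γ ∈ ℝ, s ≥ 0, k ≥ 0, let b_1, …, b_k be distinct nonzero real numbers and λ_1, …, λ_k > 0, and let μ be the Borel probability measure on ℝ whose characteristic function is φ_μ(u) = exp( iγu − s²u²/2 + Σ_{i=1}^{k} λ_i (e^{iub_i} − 1) ) for all u ∈ ℝ (such a μ exists and is classically infinitely divisible). Let (μ_n)_{n≥1} be Borel probability measures on ℝ, each infinitely divisible with respect to classical convolution, with finite moments of order up to 2k+4, and suppose ∫ x^i dμ_n → ∫ x^i dμ as n → ∞ for every i = 1, …, 2k+4. Then μ_n converges weakly to μ. -/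

import Mathlib

open MeasureTheory Filter Topology BoundedContinuousFunction

/-- Classical convolution of two Borel measures on ℝ: the pushforward of the
product measure under addition. -/
noncomputable def classicalConv (μ ν : Measure ℝ) : Measure ℝ :=
  (μ.prod ν).map (fun p => p.1 + p.2)

/-- The m-fold classical convolution power of a measure (0th power is δ₀). -/
noncomputable def convPow (ν : Measure ℝ) : ℕ → Measure ℝ
  | 0 => Measure.dirac 0
  | n + 1 => classicalConv (convPow ν n) ν

/-- A probability measure is classically infinitely divisible if for every m ≥ 1 it
is the m-fold classical convolution power of some probability measure. -/
def IsClassicallyInfDiv (μ : Measure ℝ) : Prop :=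
  ∀ m : ℕ, 1 ≤ m → ∃ ν : Measure ℝ, IsProbabilityMeasure ν ∧ μ = convPow ν m

/-- Weak convergence of a sequence of measures: convergence of integrals of all
bounded continuous functions. -/
def WeakConv (μs : ℕ → Measure ℝ) (μ : Measure ℝ) : Prop :=
  ∀ f : ℝ →ᵇ ℝ, Tendsto (fun n => ∫ x, f x ∂(μs n)) atTop (𝓝 (∫ x, f x ∂μ))

/-- The characteristic function of a Borel measure μ on ℝ: u ↦ ∫ e^{iux} dμ(x). -/
noncomputable def charFn (μ : Measure ℝ) (u : ℝ) : ℂ :=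
  ∫ x, Complex.exp (Complex.I * (u : ℂ) * (x : ℂ)) ∂μ

/-!
Write the measures of the sequence as `νₙ ^ {∗ mₙ}` with `mₙ → ∞`. Taking logarithms of the moment
generating series, convergence of the first `N` moments of `νₙ ^ {∗ mₙ}` becomes
`mₙ ∫ xʲ dνₙ → κⱼ` for `1 ≤ j ≤ N`, where `κⱼ` are the cumulants of the limit law. Hence
`mₙ ∫ q dνₙ → Λ q` for every polynomial `q` of degree at most `N` with `q 0 = 0`, where
`Λ f = γ f'(0) + s² f''(0) / 2 + ∑ λᵢ f(bᵢ)`.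

The nonnegative polynomial `w x = x⁴ ∏ (x - bᵢ)²`, of degree `N = 2k + 4`, satisfies `Λ w = 0`. By
Hermite interpolation an entire `f` that is bounded on `ℝ` is `q + w g` with `g` bounded on `ℝ` and
`deg q < N`; the second term is killed in the limit because `mₙ ∫ w dνₙ → 0`, so `mₙ ∫ f dνₙ → Λ f`
whenever `f 0 = 0`. For `f x = exp (i u x) - 1` this says that `mₙ (φ_{νₙ}(u) - 1)` converges to the
Lévy exponent, and Lévy's continuity theorem concludes.
-/

open ProbabilityTheory
open Finset.HasAntidiagonal (antidiagonal mem_antidiagonal)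

lemma classicalConv_eq_conv (μ ν : Measure ℝ) : classicalConv μ ν = μ ∗ ν := rfl

lemma charFn_eq_charFun (μ : Measure ℝ) (u : ℝ) : charFn μ u = charFun μ u := by
  rw [charFn, charFun_apply_real]
  congr with x
  ring_nf

instance isProbabilityMeasure_convPow (ν : Measure ℝ) [IsProbabilityMeasure ν] :
    ∀ m, IsProbabilityMeasure (convPow ν m)
  | 0 => inferInstanceAs (IsProbabilityMeasure (Measure.dirac 0))
  | m + 1 =>
    have := isProbabilityMeasure_convPow ν m
    inferInstanceAs (IsProbabilityMeasure (convPow ν m ∗ ν))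

lemma charFun_convPow (ν : Measure ℝ) [IsProbabilityMeasure ν] (m : ℕ) (u : ℝ) :
    charFun (convPow ν m) u = charFun ν u ^ m := by
  induction m with
  | zero => simp [convPow]
  | succ m ih => rw [convPow, classicalConv_eq_conv, charFun_conv, ih, pow_succ]

section Moments

open PowerSeries

variable {μ ν : Measure ℝ} {p : ENNReal}

lemma memLp_id_conv [IsFiniteMeasure μ] [IsFiniteMeasure ν]
    (hμ : MemLp id p μ) (hν : MemLp id p ν) : MemLp id p (μ ∗ ν) := by
  rw [Measure.conv, memLp_map_measure_iff (by fun_prop) (by fun_prop)]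
  exact (hμ.comp_fst ν).add (hν.comp_snd μ)

lemma memLp_natCast_iff_integrable_pow {α : Type*} [MeasurableSpace α] {μ : Measure α}
    [IsFiniteMeasure μ] {f : α → ℝ} (hf : AEStronglyMeasurable f μ) (N : ℕ) :
    MemLp f N μ ↔ Integrable (fun x ↦ f x ^ N) μ := by
  rcases eq_or_ne N 0 with rfl | hN
  · simpa [memLp_zero_iff_aestronglyMeasurable] using hf
  · rw [← integrable_norm_rpow_iff hf (by simpa) (by simp),
      ← integrable_norm_iff (f := fun x ↦ f x ^ N) (hf.pow N)]
    simp

lemma integrable_pow_of_memLp_id [IsFiniteMeasure ν] {N j : ℕ} (h : MemLp id N ν) (hj : j ≤ N) :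
    Integrable (fun x ↦ x ^ j) ν :=
  (memLp_natCast_iff_integrable_pow aestronglyMeasurable_id j).1
    (h.mono_exponent (by exact_mod_cast hj))

lemma memLp_id_right_of_conv [IsFiniteMeasure μ] [NeZero μ] [IsFiniteMeasure ν]
    {N : ℕ} (h : MemLp id N (μ ∗ ν)) : MemLp id N ν := by
  rw [Measure.conv, memLp_map_measure_iff (by fun_prop) (by fun_prop),
    memLp_natCast_iff_integrable_pow (by fun_prop)] at h
  obtain ⟨x, hx⟩ := h.prod_right_ae.exists
  have hshift : MemLp (fun y ↦ x + y) N ν :=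
    (memLp_natCast_iff_integrable_pow (by fun_prop) N).2 hx
  exact (hshift.sub (memLp_const x)).ae_eq (ae_of_all _ fun y ↦ add_sub_cancel_left x y)

lemma memLp_id_convPow [IsProbabilityMeasure ν] (h : MemLp id p ν) (m : ℕ) :
    MemLp id p (convPow ν m) := by
  induction m with
  | zero => exact (memLp_const 0).ae_eq <| by rw [convPow, EventuallyEq, ae_dirac_eq]; rfl
  | succ m ih => exact memLp_id_conv ih h

lemma memLp_id_of_convPow [IsProbabilityMeasure ν] {N m : ℕ} (hm : m ≠ 0)
    (h : MemLp id N (convPow ν m)) : MemLp id N ν := by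
  obtain ⟨m, rfl⟩ := Nat.exists_eq_succ_of_ne_zero hm
  exact memLp_id_right_of_conv h

/-- The exponential generating series `∑ (∫ xʲ dμ) / j! Xʲ` of the moments of `μ`. A divergent
moment contributes the junk value `0`, so only the coefficients up to the order of a finite moment
are meaningful. -/
noncomputable def momentSeries (μ : Measure ℝ) : ℝ⟦X⟧ :=
  PowerSeries.mk fun j ↦ (∫ x, x ^ j ∂μ) / j.factorial

lemma coeff_momentSeries (μ : Measure ℝ) (j : ℕ) :
    coeff j (momentSeries μ) = (∫ x, x ^ j ∂μ) / j.factorial :=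
  coeff_mk _ _

lemma constantCoeff_momentSeries (μ : Measure ℝ) [IsProbabilityMeasure μ] :
    constantCoeff (momentSeries μ) = 1 := by
  simp [← coeff_zero_eq_constantCoeff_apply, coeff_momentSeries]

lemma add_pow_div_factorial (x y : ℝ) (j : ℕ) :
    (x + y) ^ j / j.factorial = ∑ p ∈ antidiagonal j,
      x ^ p.1 / p.1.factorial * (y ^ p.2 / p.2.factorial) := by
  have := congrArg (coeff j) (exp_mul_exp_eq_exp_add x y)
  simpa [coeff_mul, div_eq_mul_inv] using this.symm

lemma coeff_momentSeries_conv [IsFiniteMeasure μ] [IsFiniteMeasure ν] {N j : ℕ}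
    (hμ : MemLp id N μ) (hν : MemLp id N ν) (hj : j ≤ N) :
    coeff j (momentSeries (μ ∗ ν)) = coeff j (momentSeries μ * momentSeries ν) := by
  have hint : ∀ p ∈ antidiagonal j, Integrable (fun z : ℝ × ℝ ↦
      z.1 ^ p.1 / p.1.factorial * (z.2 ^ p.2 / p.2.factorial)) (μ.prod ν) := by
    intro p hp
    rw [mem_antidiagonal] at hp
    exact ((integrable_pow_of_memLp_id hμ (by lia)).div_const _).mul_prod
      ((integrable_pow_of_memLp_id hν (by lia)).div_const _)
  calc coeff j (momentSeries (μ ∗ ν))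
    _ = ∫ z : ℝ × ℝ, (z.1 + z.2) ^ j / j.factorial ∂μ.prod ν := by
      rw [coeff_momentSeries, Measure.conv, integral_map (by fun_prop) (by fun_prop),
        integral_div]
    _ = ∑ p ∈ antidiagonal j, ∫ z : ℝ × ℝ,
          z.1 ^ p.1 / p.1.factorial * (z.2 ^ p.2 / p.2.factorial) ∂μ.prod ν := by
      simp_rw [add_pow_div_factorial]
      exact integral_finsetSum _ hint
    _ = coeff j (momentSeries μ * momentSeries ν) := by
      rw [coeff_mul]
      refine Finset.sum_congr rfl fun p _ ↦ ?_
      rw [integral_prod_mul (fun x ↦ x ^ p.1 / _) (fun y ↦ y ^ p.2 / _), integral_div,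
        integral_div, coeff_momentSeries, coeff_momentSeries]

lemma coeff_momentSeries_convPow [IsProbabilityMeasure ν] {N : ℕ} (hν : MemLp id N ν) (m : ℕ) :
    ∀ j ≤ N, coeff j (momentSeries (convPow ν m)) = coeff j (momentSeries ν ^ m) := by
  induction m with
  | zero =>
    rintro (_ | j) -
    · simp [convPow, coeff_momentSeries]
    · simp [convPow, coeff_momentSeries, coeff_one]
  | succ m ih =>
    intro j hj
    rw [convPow, classicalConv_eq_conv, coeff_momentSeries_conv (memLp_id_convPow hν m) hν hj,
      pow_succ, coeff_mul, coeff_mul]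
    refine Finset.sum_congr rfl fun p hp ↦ ?_
    rw [ih p.1 (by rw [mem_antidiagonal] at hp; lia)]

end Moments

section PowerSeriesRoots

open PowerSeries

lemma mul_derivative_pow {R : Type*} [CommSemiring R] (A : R⟦X⟧) (m : ℕ) :
    A * d⁄dX R (A ^ m) = A ^ m * (m * d⁄dX R A) := by
  cases m with
  | zero => simp
  | succ m =>
    rw [PowerSeries.derivative_pow, Nat.add_sub_cancel]
    ring

lemma coeff_mul_eq_add_sum_erase {R : Type*} [Semiring R] (F G : R⟦X⟧) (j : ℕ) :
    coeff j (F * G) = constantCoeff F * coeff j G +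
      ∑ p ∈ (antidiagonal j).erase (0, j), coeff p.1 F * coeff p.2 G := by
  rw [coeff_mul, ← Finset.add_sum_erase _ _ (by simp : (0, j) ∈ antidiagonal j),
    coeff_zero_eq_constantCoeff_apply]

variable {α : Type*} {l : Filter α} {j N : ℕ}

lemma tendsto_coeff_mul {R : Type*} [Semiring R] [TopologicalSpace R] [IsTopologicalSemiring R]
    {F G : α → R⟦X⟧} {F₀ G₀ : R⟦X⟧}
    (hF : ∀ i ≤ j, Tendsto (fun n ↦ coeff i (F n)) l (𝓝 (coeff i F₀)))
    (hG : ∀ i ≤ j, Tendsto (fun n ↦ coeff i (G n)) l (𝓝 (coeff i G₀))) :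
    Tendsto (fun n ↦ coeff j (F n * G n)) l (𝓝 (coeff j (F₀ * G₀))) := by
  simp only [coeff_mul]
  refine tendsto_finsetSum _ fun p hp ↦ ?_
  rw [mem_antidiagonal] at hp
  exact (hF _ (by lia)).mul (hG _ (by lia))

lemma tendsto_coeff_of_tendsto_coeff_mul {R : Type*} [Ring R] [TopologicalSpace R]
    [IsTopologicalRing R] {F G : α → R⟦X⟧} {F₀ G₀ : R⟦X⟧}
    (hF1 : ∀ n, constantCoeff (F n) = 1) (hF₀ : constantCoeff F₀ = 1)
    (hF : ∀ i ≤ N, Tendsto (fun n ↦ coeff i (F n)) l (𝓝 (coeff i F₀)))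
    (hFG : ∀ i ≤ N, Tendsto (fun n ↦ coeff i (F n * G n)) l (𝓝 (coeff i (F₀ * G₀)))) :
    ∀ j ≤ N, Tendsto (fun n ↦ coeff j (G n)) l (𝓝 (coeff j G₀)) := by
  intro j
  induction j using Nat.strong_induction_on with | _ j ih
  intro hj
  have hsolve {F G : R⟦X⟧} (h : constantCoeff F = 1) : coeff j G =
      coeff j (F * G) - ∑ p ∈ (antidiagonal j).erase (0, j), coeff p.1 F * coeff p.2 G := by
    rw [coeff_mul_eq_add_sum_erase, h, one_mul, add_sub_cancel_right]
  rw [hsolve hF₀, funext fun n ↦ hsolve (hF1 n)]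
  refine (hFG j hj).sub (tendsto_finsetSum _ fun p hp ↦ ?_)
  obtain ⟨hne, hp⟩ := Finset.mem_erase.1 hp
  rw [mem_antidiagonal] at hp
  have hp1 : p.1 ≠ 0 := fun h0 ↦ hne (Prod.ext h0 (by simpa [h0] using hp))
  exact (hF _ (by lia)).mul (ih _ (by lia) (by lia))

variable {A : α → ℝ⟦X⟧} {m : α → ℕ}

lemma tendsto_coeff_one_of_tendsto_natCast_mul_coeff {c : ℕ → ℝ}
    (hA : ∀ n, constantCoeff (A n) = 1) (hm : Tendsto m l atTop)
    (hlim : ∀ j, 1 ≤ j → j ≤ N → Tendsto (fun n ↦ m n * coeff j (A n)) l (𝓝 (c j))) :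
    ∀ j ≤ N, Tendsto (fun n ↦ coeff j (A n)) l (𝓝 (coeff j (1 : ℝ⟦X⟧))) := by
  rintro (_ | j) hj
  · simpa [hA] using tendsto_const_nhds
  · have hmul : Tendsto (fun n ↦ (m n : ℝ)⁻¹ * (m n * coeff (j + 1) (A n))) l (𝓝 0) := by
      simpa using (tendsto_inv_atTop_zero.comp (tendsto_natCast_atTop_atTop.comp hm)).mul
        (hlim (j + 1) (by lia) hj)
    rw [coeff_one, if_neg j.succ_ne_zero]
    refine hmul.congr' ?_
    filter_upwards [hm.eventually_ne_atTop 0] with n hn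
    field_simp

-- If `M = exp K`, then `A n ^ m n → exp K` forces `m n * (A n - 1) → K`; the hypothesis `hK` is the
-- differential equation of `exp K`, and the proof compares `m n * A n' * A n ^ m n` with `K' * M`.
lemma tendsto_natCast_mul_coeff_of_tendsto_coeff_pow {M K : ℝ⟦X⟧}
    (hA : ∀ n, constantCoeff (A n) = 1) (hm : Tendsto m l atTop)
    (hM : constantCoeff M = 1) (hK : d⁄dX ℝ M = M * d⁄dX ℝ K)
    (hlim : ∀ j ≤ N, Tendsto (fun n ↦ coeff j (A n ^ m n)) l (𝓝 (coeff j M))) :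
    ∀ j, 1 ≤ j → j ≤ N → Tendsto (fun n ↦ m n * coeff j (A n)) l (𝓝 (coeff j K)) := by
  intro j
  induction j using Nat.strong_induction_on with | _ j ih
  intro hj hjN
  obtain ⟨j, rfl⟩ := Nat.exists_eq_add_of_le' hj
  have hA1 := tendsto_coeff_one_of_tendsto_natCast_mul_coeff (N := j) hA hm
    fun i hi hij ↦ ih i (by lia) hi (by lia)
  have hderiv : ∀ i ≤ j,
      Tendsto (fun n ↦ coeff i (d⁄dX ℝ (A n ^ m n))) l (𝓝 (coeff i (d⁄dX ℝ M))) := by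
    intro i hi
    simp_rw [coeff_derivative]
    exact (hlim (i + 1) (by lia)).mul_const _
  have hmul : ∀ i ≤ j, Tendsto (fun n ↦ coeff i (A n ^ m n * ((m n : ℝ⟦X⟧) * d⁄dX ℝ (A n)))) l
      (𝓝 (coeff i (M * d⁄dX ℝ K))) := by
    intro i hi
    simp_rw [← mul_derivative_pow, ← hK]
    rw [← one_mul (d⁄dX ℝ M)]
    exact tendsto_coeff_mul (fun i' h ↦ hA1 i' (by lia)) fun i' h ↦ hderiv i' (by lia)
  have hquot := tendsto_coeff_of_tendsto_coeff_mul (by simp [hA]) hM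
    (fun i hi ↦ hlim i (by lia)) hmul j le_rfl
  simp_rw [← nsmul_eq_mul, map_nsmul, nsmul_eq_mul, coeff_derivative, ← mul_assoc] at hquot
  simpa [mul_div_cancel_right₀ _ (Nat.cast_add_one_ne_zero (R := ℝ) j)]
    using hquot.div_const ((j : ℝ) + 1)

end PowerSeriesRoots

section Maclaurin

open PowerSeries
open scoped ContDiff

variable {𝕜 : Type*} [NontriviallyNormedField 𝕜]

/-- The formal Taylor series at `0` of a function that is smooth there. -/
noncomputable def maclaurinSeries (f : 𝕜 → 𝕜) : 𝕜⟦X⟧ :=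
  PowerSeries.mk fun j ↦ iteratedDeriv j f 0 / j.factorial

lemma maclaurinSeries_congr {f g : 𝕜 → 𝕜} (h : f =ᶠ[𝓝 0] g) :
    maclaurinSeries f = maclaurinSeries g := by
  ext j
  simp [maclaurinSeries, h.iteratedDeriv_eq]

variable [CharZero 𝕜]

lemma derivative_maclaurinSeries (f : 𝕜 → 𝕜) :
    d⁄dX 𝕜 (maclaurinSeries f) = maclaurinSeries (deriv f) := by
  ext j
  rw [coeff_derivative, maclaurinSeries, maclaurinSeries, coeff_mk, coeff_mk, iteratedDeriv_succ',
    Nat.factorial_succ, Nat.cast_mul, Nat.cast_succ]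
  have := Nat.cast_add_one_ne_zero (R := 𝕜) j
  field

lemma maclaurinSeries_mul {f g : 𝕜 → 𝕜} (hf : ContDiffAt 𝕜 ∞ f 0) (hg : ContDiffAt 𝕜 ∞ g 0) :
    maclaurinSeries (f * g) = maclaurinSeries f * maclaurinSeries g := by
  ext j
  rw [coeff_mul, Finset.Nat.sum_antidiagonal_eq_sum_range_succ_mk, maclaurinSeries, coeff_mk,
    iteratedDeriv_mul (hf.of_le (mod_cast le_top)) (hg.of_le (mod_cast le_top)),
    Finset.sum_div]
  refine Finset.sum_congr rfl fun i hi ↦ ?_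
  rw [Nat.cast_choose 𝕜 (Finset.mem_range_succ_iff.1 hi), maclaurinSeries, maclaurinSeries,
    coeff_mk, coeff_mk]
  have hfac (i : ℕ) : (i.factorial : 𝕜) ≠ 0 := Nat.cast_ne_zero.2 i.factorial_ne_zero
  field_simp [hfac]

end Maclaurin

section Cumulants

open PowerSeries

variable {μ : Measure ℝ}

lemma maclaurinSeries_mgf (h : 0 ∈ interior (integrableExpSet id μ)) :
    maclaurinSeries (mgf id μ) = momentSeries μ := by
  ext j
  simp [maclaurinSeries, momentSeries, iteratedDeriv_mgf_zero h]

lemma derivative_momentSeries [NeZero μ] (h : 0 ∈ interior (integrableExpSet id μ)) :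
    d⁄dX ℝ (momentSeries μ) = momentSeries μ * d⁄dX ℝ (maclaurinSeries (cgf id μ)) := by
  have hderiv : deriv (mgf id μ) =ᶠ[𝓝 0] mgf id μ * deriv (cgf id μ) := by
    filter_upwards [isOpen_interior.mem_nhds h] with t ht
    have hmgf : mgf id μ t ≠ 0 :=
      (mgf_pos' (NeZero.ne μ) (interior_subset (s := integrableExpSet id μ) ht)).ne'
    rw [Pi.mul_apply, deriv_cgf ht, deriv_mgf ht, mul_div_cancel₀ _ hmgf]
  rw [← maclaurinSeries_mgf h, derivative_maclaurinSeries, derivative_maclaurinSeries,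
    maclaurinSeries_congr hderiv,
    maclaurinSeries_mul (analyticAt_mgf h).contDiffAt (analyticAt_cgf h).deriv.contDiffAt]

lemma tendsto_natCast_mul_integral_pow_of_convPow [IsProbabilityMeasure μ]
    (h : 0 ∈ interior (integrableExpSet id μ)) {α : Type*} {l : Filter α} {ν : α → Measure ℝ}
    [∀ n, IsProbabilityMeasure (ν n)] {m : α → ℕ} (hm : Tendsto m l atTop) {N : ℕ}
    (hν : ∀ n, MemLp id N (ν n))
    (hmom : ∀ j, 1 ≤ j → j ≤ N →
      Tendsto (fun n ↦ ∫ x, x ^ j ∂(convPow (ν n) (m n))) l (𝓝 (∫ x, x ^ j ∂μ)))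
    {j : ℕ} (hj : 1 ≤ j) (hjN : j ≤ N) :
    Tendsto (fun n ↦ m n * ∫ x, x ^ j ∂(ν n)) l (𝓝 (iteratedDeriv j (cgf id μ) 0)) := by
  have hpow : ∀ i ≤ N, Tendsto (fun n ↦ coeff i (momentSeries (ν n) ^ m n)) l
      (𝓝 (coeff i (momentSeries μ))) := by
    intro i hi
    rw [← funext fun n ↦ coeff_momentSeries_convPow (hν n) (m n) i hi]
    simp_rw [coeff_momentSeries]
    rcases Nat.eq_zero_or_pos i with rfl | hi0
    · simpa using tendsto_const_nhds
    · exact (hmom i hi0 hi).div_const _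
  have hcoeff := tendsto_natCast_mul_coeff_of_tendsto_coeff_pow
    (fun n ↦ constantCoeff_momentSeries (ν n)) hm (constantCoeff_momentSeries μ)
    (derivative_momentSeries h) hpow j hj hjN
  have hfac : (j.factorial : ℝ) ≠ 0 := Nat.cast_ne_zero.2 j.factorial_ne_zero
  simpa [coeff_momentSeries, maclaurinSeries, mul_assoc, div_mul_cancel₀ _ hfac]
    using hcoeff.mul_const (j.factorial : ℝ)

end Cumulants

section HermiteInterpolation

open Polynomial

lemma differentiable_dslope {f : ℂ → ℂ} (hf : Differentiable ℂ f) (a : ℂ) :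
    Differentiable ℂ (dslope f a) := by
  rw [← differentiableOn_univ, Complex.differentiableOn_dslope univ_mem]
  exact hf.differentiableOn

lemma exists_norm_dslope_ofReal_le {f : ℂ → ℂ} (hf : Differentiable ℂ f)
    (hbdd : ∃ C, ∀ x : ℝ, ‖f x‖ ≤ C) (a : ℝ) : ∃ C, ∀ x : ℝ, ‖dslope f a x‖ ≤ C := by
  obtain ⟨C, hC⟩ := hbdd
  have hcont : Continuous fun x : ℝ ↦ dslope f a x :=
    (differentiable_dslope hf a).continuous.comp Complex.continuous_ofReal
  obtain ⟨D, hD⟩ :=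
    (isCompact_closedBall a 1).exists_bound_of_continuousOn hcont.continuousOn
  refine ⟨max D (C + C), fun x ↦ ?_⟩
  by_cases hx : x ∈ Metric.closedBall a 1
  · exact (hD x hx).trans (le_max_left _ _)
  · have hfar : 1 ≤ ‖(x : ℂ) - a‖ := by
      rw [← dist_eq_norm, Complex.dist_of_im_eq (by simp)]
      simpa using (not_le.1 hx).le
    calc ‖dslope f a x‖ ≤ ‖(x : ℂ) - a‖ * ‖dslope f a x‖ :=
          le_mul_of_one_le_left (norm_nonneg _) hfar
      _ = ‖f x - f a‖ := by rw [← norm_smul, sub_smul_dslope]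
      _ ≤ C + C := norm_sub_le_of_le (hC x) (hC a)
      _ ≤ max D (C + C) := le_max_right _ _

lemma exists_eq_eval_add_prod_mul (s : Multiset ℝ) :
    ∀ {f : ℂ → ℂ}, Differentiable ℂ f → (∃ C, ∀ x : ℝ, ‖f x‖ ≤ C) →
      ∃ q : ℂ[X], q.degree < s.card ∧ ∃ g : ℂ → ℂ, Differentiable ℂ g ∧
        (∃ C, ∀ x : ℝ, ‖g x‖ ≤ C) ∧
        ∀ z, f z = q.eval z + aeval z (s.map fun a ↦ X - Polynomial.C a).prod * g z := by
  induction s using Multiset.induction with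
  | empty => exact fun hf hbdd ↦ ⟨0, by simp, _, hf, hbdd, by simp⟩
  | cons a s ih =>
    intro f hf hbdd
    obtain ⟨q, hq, g, hg, hgbdd, heq⟩ :=
      ih (differentiable_dslope hf a) (exists_norm_dslope_ofReal_le hf hbdd a)
    refine ⟨Polynomial.C (f a) + (X - Polynomial.C (a : ℂ)) * q, ?_, g, hg, hgbdd, fun z ↦ ?_⟩
    · rw [degree_lt_iff_coeff_zero] at hq ⊢
      rintro (_ | j) hj
      · simp at hj
      · have hj : s.card ≤ j := by simpa using hj
        rw [coeff_add, sub_mul, coeff_sub, coeff_X_mul, coeff_C_mul, coeff_C_succ, hq j hj,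
          hq (j + 1) (by lia)]
        simp
    · have hslope := sub_smul_dslope f (a : ℂ) z
      rw [heq z, smul_eq_mul] at hslope
      simp only [Multiset.map_cons, Multiset.prod_cons, map_mul, map_sub, aeval_X, aeval_C,
        Complex.coe_algebraMap, eval_add, eval_mul, eval_sub, eval_X, eval_C]
      linear_combination -hslope

end HermiteInterpolation

section Limits

open Polynomial

lemma integrable_eval_of_memLp_id {ν : Measure ℝ} [IsFiniteMeasure ν] {N : ℕ}
    (hν : MemLp id N ν) {q : ℂ[X]} (hq : q.natDegree ≤ N) :
    Integrable (fun x : ℝ ↦ q.eval (x : ℂ)) ν := by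
  simp_rw [eval_eq_sum_range]
  refine integrable_finsetSum _ fun j hj ↦ ?_
  have hj := Finset.mem_range_succ_iff.1 hj
  simpa using ((integrable_pow_of_memLp_id hν (hj.trans hq)).ofReal (𝕜 := ℂ)).const_mul (q.coeff j)

lemma integral_eval_eq_sum {ν : Measure ℝ} [IsFiniteMeasure ν] {N : ℕ}
    (hν : MemLp id N ν) {q : ℂ[X]} (hq : q.natDegree ≤ N) :
    ∫ x : ℝ, q.eval (x : ℂ) ∂ν = q.sum fun j a ↦ a * (∫ x, x ^ j ∂ν : ℝ) := by
  have hint : ∀ j ∈ q.support, Integrable (fun x : ℝ ↦ q.coeff j * ((x ^ j : ℝ) : ℂ)) ν :=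
    fun j hj ↦ (integrable_pow_of_memLp_id hν
      ((le_natDegree_of_mem_supp j hj).trans hq)).ofReal.const_mul _
  simp_rw [eval_eq_sum, Polynomial.sum_def, ← Complex.ofReal_pow]
  rw [integral_finsetSum _ hint]
  exact Finset.sum_congr rfl fun j _ ↦ by rw [integral_const_mul, integral_complex_ofReal]

lemma tendsto_natCast_mul_integral_mul_of_bounded {Ω α : Type*} [MeasurableSpace Ω] {l : Filter α}
    {ν : α → Measure Ω} {m : α → ℕ} {W : Ω → ℝ} {g : Ω → ℂ} {C : ℝ}
    (hW : ∀ x, 0 ≤ W x) (hint : ∀ n, Integrable W (ν n))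
    (hlim : Tendsto (fun n ↦ m n * ∫ x, W x ∂(ν n)) l (𝓝 0)) (hg : ∀ x, ‖g x‖ ≤ C) :
    Tendsto (fun n ↦ m n * ∫ x, W x * g x ∂(ν n)) l (𝓝 0) := by
  have hbound := hlim.const_mul C
  rw [mul_zero] at hbound
  refine squeeze_zero_norm (fun n ↦ ?_) hbound
  have hnorm : ‖∫ x, W x * g x ∂(ν n)‖ ≤ C * ∫ x, W x ∂(ν n) := by
    rw [← integral_const_mul]
    refine norm_integral_le_of_norm_le ((hint n).const_mul C) (ae_of_all _ fun x ↦ ?_)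
    rw [norm_mul, Complex.norm_of_nonneg (hW x), mul_comm]
    exact mul_le_mul_of_nonneg_right (hg x) (hW x)
  rw [norm_mul, Complex.norm_natCast, mul_left_comm]
  exact mul_le_mul_of_nonneg_left hnorm (Nat.cast_nonneg _)

open Asymptotics in
lemma tendsto_one_add_pow_exp_of_tendsto_natCast_mul {α : Type*} {l : Filter α} {m : α → ℕ}
    {g : α → ℂ} {t : ℂ} (hm : Tendsto m l atTop) (hg : Tendsto (fun n ↦ m n * g n) l (𝓝 t)) :
    Tendsto (fun n ↦ (1 + g n) ^ m n) l (𝓝 (Complex.exp t)) := by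
  have hminv : Tendsto (fun n ↦ (m n : ℂ)⁻¹) l (𝓝 0) :=
    tendsto_inv₀_cobounded.comp ((tendsto_natCast_atTop_cobounded (α := ℂ)).comp hm)
  have hm0 : ∀ᶠ n in l, (m n : ℂ) ≠ 0 := by
    filter_upwards [hm.eventually_ne_atTop 0] with n hn using Nat.cast_ne_zero.2 hn
  have hg0 : Tendsto g l (𝓝 0) := by
    rw [← zero_mul t]
    refine (hminv.mul hg).congr' ?_
    filter_upwards [hm0] with n hn using inv_mul_cancel_left₀ hn _
  have herror : Tendsto (fun n ↦ m n * (Complex.log (1 + g n) - g n)) l (𝓝 0) := by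
    have hO : (fun n ↦ m n * (Complex.log (1 + g n) - g n)) =O[l] fun n ↦ m n * g n ^ 2 :=
      (isBigO_refl _ _).mul (Complex.log_sub_self_isBigO.comp_tendsto hg0)
    refine hO.trans_tendsto ?_
    simpa [pow_two, mul_assoc] using hg.mul hg0
  have hlog : Tendsto (fun n ↦ m n * Complex.log (1 + g n)) l (𝓝 t) := by
    simpa [mul_sub] using herror.add hg
  refine ((Complex.continuous_exp.tendsto t).comp hlog).congr' ?_
  filter_upwards [hg0.eventually_ne (show (0 : ℂ) ≠ -1 by simp)] with n hn
  rw [Function.comp_apply, Complex.exp_nat_mul, Complex.exp_log]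
  contrapose! hn
  linear_combination hn

end Limits

lemma iteratedDeriv_pow_mul_zero {𝕜 : Type*} [NontriviallyNormedField 𝕜] {h : 𝕜 → 𝕜} {n k : ℕ}
    (hnk : n < k) (hh : ContDiffAt 𝕜 n h 0) :
    iteratedDeriv n (fun z ↦ z ^ k * h z) 0 = 0 := by
  rw [iteratedDeriv_fun_mul (by fun_prop) hh]
  refine Finset.sum_eq_zero fun i hi ↦ ?_
  have hik : i ≠ k := by grind
  rw [iteratedDeriv_fun_pow_zero, if_neg hik, Nat.cast_zero, mul_zero, zero_mul]

section ComplexMGF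

open scoped NNReal

lemma complexMGF_id_conv (μ ν : Measure ℝ) [SFinite μ] [SFinite ν] (z : ℂ) :
    complexMGF id (μ ∗ ν) z = complexMGF id μ z * complexMGF id ν z := by
  simp only [complexMGF, id]
  rw [Measure.conv, integral_map (by fun_prop) (by fun_prop), ← integral_prod_mul]
  simp [mul_add, Complex.exp_add]

lemma complexMGF_id_map_const_mul_poissonMeasure (r : ℝ≥0) (b : ℝ) (z : ℂ) :
    complexMGF id ((poissonMeasure r).map fun n : ℕ ↦ b * (n : ℝ)) z =
      Complex.exp (r * (Complex.exp (z * b) - 1)) := by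
  have hseries := (NormedSpace.expSeries_div_hasSum_exp (r * Complex.exp (z * b))).mul_left
    (Complex.exp (-r))
  rw [← Complex.exp_eq_exp_ℂ, ← Complex.exp_add] at hseries
  rw [complexMGF, integral_map (by fun_prop) (by fun_prop), integral_poissonMeasure, mul_sub_one,
    sub_eq_neg_add, ← hseries.tsum_eq]
  congr with n
  rw [mul_pow, ← Complex.exp_nat_mul]
  simp only [Complex.real_smul, id]
  push_cast
  ring_nf

end ComplexMGF

/-- Gaussian variance, drift, and Lévy measure `∑ i, rate i • δ_{jump i}` of an infinitely
divisible law on `ℝ` whose Lévy measure has finite support. Jumps may vanish or coincide, and rates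
may vanish. -/
structure FiniteLevyTriplet (ι : Type*) where
  drift : ℝ
  variance : NNReal
  jump : ι → ℝ
  rate : ι → NNReal

namespace FiniteLevyTriplet

variable {ι : Type*} [Fintype ι] (T : FiniteLevyTriplet ι)

/-- The Lévy exponent: `exp ∘ T.exponent` is the complex moment generating function of the law with
triplet `T`, so that its characteristic function is `u ↦ exp (T.exponent (u * I))`. -/
noncomputable def exponent (z : ℂ) : ℂ :=
  z * T.drift + T.variance * z ^ 2 / 2 + ∑ i, T.rate i * (Complex.exp (z * T.jump i) - 1)

/-- `μ` is the law with triplet `T`, as identified by its characteristic function. -/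
def IsLaw (μ : Measure ℝ) : Prop :=
  ∀ u : ℝ, charFun μ u = Complex.exp (T.exponent (u * Complex.I))

/-- The cumulants of the law with triplet `T`, of orders `j ≥ 1`. -/
noncomputable def cumulant (j : ℕ) : ℝ :=
  (if j = 1 then T.drift else 0) + (if j = 2 then (T.variance : ℝ) else 0) +
    ∑ i, T.rate i * T.jump i ^ j

lemma exists_complexMGF_id_eq :
    ∃ ν : Measure ℝ, IsProbabilityMeasure ν ∧
      ∀ z, complexMGF id ν z = Complex.exp (T.exponent z) := by
  suffices h : ∀ S : Finset ι, ∃ ν : Measure ℝ, IsProbabilityMeasure ν ∧ ∀ z, complexMGF id ν z =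
      Complex.exp (z * T.drift + T.variance * z ^ 2 / 2 +
        ∑ i ∈ S, T.rate i * (Complex.exp (z * T.jump i) - 1)) from h Finset.univ
  intro S
  induction S using Finset.cons_induction with
  | empty =>
    exact ⟨gaussianReal T.drift T.variance, inferInstance, by simp [complexMGF_id_gaussianReal]⟩
  | cons i S hi ih =>
    obtain ⟨ν, hν, hmgf⟩ := ih
    let ρ := (poissonMeasure (T.rate i)).map fun n : ℕ ↦ T.jump i * (n : ℝ)
    have : IsProbabilityMeasure ρ := Measure.isProbabilityMeasure_map (by fun_prop)
    refine ⟨ν ∗ ρ, inferInstance, fun z ↦ ?_⟩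
    rw [complexMGF_id_conv, hmgf, complexMGF_id_map_const_mul_poissonMeasure, ← Complex.exp_add,
      Finset.sum_cons]
    ring_nf

lemma isLaw_of_charFn_eq {μ : Measure ℝ} {γ s : ℝ} {b lam : ι → ℝ} (hlam : ∀ i, 0 ≤ lam i)
    (hchar : ∀ u : ℝ, charFn μ u =
      Complex.exp (Complex.I * γ * u - s ^ 2 * u ^ 2 / 2
        + ∑ i, lam i * (Complex.exp (Complex.I * u * b i) - 1))) :
    IsLaw ⟨γ, (s ^ 2).toNNReal, b, fun i ↦ (lam i).toNNReal⟩ μ := by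
  intro u
  rw [← charFn_eq_charFun, hchar]
  simp only [exponent, Real.coe_toNNReal _ (sq_nonneg s), Real.coe_toNNReal _ (hlam _),
    Complex.ofReal_pow, mul_pow, Complex.I_sq]
  ring_nf

section Law

variable {T} {μ : Measure ℝ} [IsProbabilityMeasure μ]

lemma IsLaw.complexMGF_id_eq (hμ : T.IsLaw μ) (z : ℂ) :
    complexMGF id μ z = Complex.exp (T.exponent z) := by
  obtain ⟨ν, hν, hmgf⟩ := T.exists_complexMGF_id_eq
  have hμν : μ = ν := by
    refine Measure.ext_of_charFun (funext fun u ↦ ?_)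
    rw [hμ, ← hmgf, complexMGF_id_mul_I]
  rw [hμν, hmgf]

lemma IsLaw.mgf_id_eq (hμ : T.IsLaw μ) (t : ℝ) :
    mgf id μ t = Real.exp (t * T.drift + T.variance * t ^ 2 / 2 +
      ∑ i, T.rate i * (Real.exp (t * T.jump i) - 1)) := by
  have h := hμ.complexMGF_id_eq t
  rw [complexMGF_ofReal, exponent] at h
  exact_mod_cast h

lemma IsLaw.integrableExpSet_id_eq_univ (hμ : T.IsLaw μ) :
    integrableExpSet id μ = Set.univ := by
  refine Set.eq_univ_of_forall fun t ↦ Integrable.of_integral_ne_zero ?_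
  exact (hμ.mgf_id_eq t).trans_ne (Real.exp_ne_zero _)

lemma IsLaw.iteratedDeriv_cgf_id_zero (hμ : T.IsLaw μ) {j : ℕ} (hj : j ≠ 0) :
    iteratedDeriv j (cgf id μ) 0 = T.cumulant j := by
  have hcgf : cgf id μ = fun t ↦ T.drift * t + (T.variance / 2 : ℝ) * t ^ 2 +
      ∑ i, T.rate i * (Real.exp (T.jump i * t) - 1) := by
    ext t
    rw [cgf, hμ.mgf_id_eq, Real.log_exp]
    ring_nf
  have hexp (i : ι) : iteratedDeriv j (fun t ↦ Real.exp (T.jump i * t) - 1) 0 = T.jump i ^ j := by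
    rw [iteratedDeriv_fun_sub (by fun_prop) (by fun_prop), iteratedDeriv_exp_const_mul]
    simp [iteratedDeriv_const, hj]
  have hlin : iteratedDeriv j (fun t ↦ T.drift * t) 0 = if j = 1 then T.drift else 0 := by
    rw [iteratedDeriv_const_mul_field T.drift fun t ↦ t, iteratedDeriv_fun_id_zero]
    simp
  rw [hcgf, iteratedDeriv_fun_add (by fun_prop) (by fun_prop),
    iteratedDeriv_fun_add (by fun_prop) (by fun_prop), iteratedDeriv_fun_sum (by fun_prop), hlin]
  simp only [iteratedDeriv_const_mul_field, hexp, cumulant, iteratedDeriv_fun_pow_zero]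
  simp [mul_ite]

end Law

section Functional

open Polynomial

/-- The functional `f ↦ drift * f'(0) + variance / 2 * f''(0) + ∫ f`, the integral being taken
against the Lévy measure: for `f 0 = 0`, the limit of `n * ∫ f` along the `n`-th convolution roots
of the law with triplet `T`. -/
noncomputable def functional (f : ℂ → ℂ) : ℂ :=
  T.drift * deriv f 0 + T.variance / 2 * iteratedDeriv 2 f 0 + ∑ i, T.rate i * f (T.jump i)

lemma functional_add {f g : ℂ → ℂ} (hf : Differentiable ℂ f) (hg : Differentiable ℂ g) :
    T.functional (fun z ↦ f z + g z) = T.functional f + T.functional g := by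
  simp only [functional]
  rw [deriv_fun_add (hf 0) (hg 0),
    iteratedDeriv_fun_add hf.contDiff.contDiffAt hg.contDiff.contDiffAt]
  simp only [mul_add, Finset.sum_add_distrib]
  ring

lemma functional_eval (q : ℂ[X]) :
    T.functional (fun z ↦ q.eval z) = q.sum fun j a ↦ a * T.cumulant j := by
  have hderiv : deriv (fun z ↦ q.eval z) = fun z ↦ q.derivative.eval z :=
    funext fun z ↦ q.deriv
  have hderiv2 : iteratedDeriv 2 (fun z ↦ q.eval z) 0 = 2 * q.coeff 2 := by
    rw [iteratedDeriv_succ', iteratedDeriv_one, hderiv, Polynomial.deriv,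
      ← coeff_zero_eq_eval_zero, coeff_derivative, coeff_derivative]
    norm_num [mul_comm]
  have hderiv1 : deriv (fun z ↦ q.eval z) 0 = q.coeff 1 := by
    rw [Polynomial.deriv, ← coeff_zero_eq_eval_zero, coeff_derivative]
    simp
  have hsingle (k : ℕ) (c : ℂ) :
      ∑ j ∈ q.support, q.coeff j * (if j = k then c else 0) = q.coeff k * c := by
    by_cases h : q.coeff k = 0 <;> simp [h]
  rw [functional, hderiv1, hderiv2]
  simp only [cumulant, Complex.ofReal_add, mul_add, Polynomial.sum_def, Finset.sum_add_distrib,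
    eval_eq_sum]
  congr 1
  · simp only [apply_ite Complex.ofReal, Complex.ofReal_zero, hsingle]
    ring
  · simp only [Complex.ofReal_sum, Finset.mul_sum]
    rw [Finset.sum_comm]
    simp [mul_left_comm]

lemma functional_cexp_sub_one (w : ℂ) :
    T.functional (fun z ↦ Complex.exp (w * z) - 1) = T.exponent w := by
  have hderiv (j : ℕ) (hj : j ≠ 0) :
      iteratedDeriv j (fun z ↦ Complex.exp (w * z) - 1) 0 = w ^ j := by
    rw [iteratedDeriv_fun_sub (by fun_prop) (by fun_prop), iteratedDeriv_cexp_const_mul]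
    simp [iteratedDeriv_const, hj]
  rw [functional, ← iteratedDeriv_one, hderiv 1 one_ne_zero, hderiv 2 two_ne_zero, exponent]
  ring

/-- A polynomial whose square kills `T.functional`, with a double zero at `0` and a zero at each
jump. -/
noncomputable def nodePoly : ℝ[X] := X ^ 2 * ∏ i, (X - Polynomial.C (T.jump i))

lemma natDegree_nodePoly_sq : (T.nodePoly ^ 2).natDegree = 2 * Fintype.card ι + 4 := by
  rw [natDegree_pow, nodePoly, (monic_X_pow 2).natDegree_mul (monic_prod_X_sub_C T.jump _),
    natDegree_X_pow, natDegree_finsetProd_X_sub_C_eq_card, Finset.card_univ]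
  ring

lemma functional_nodePoly_sq_mul {g : ℂ → ℂ} (hg : Differentiable ℂ g) :
    T.functional (fun z ↦ aeval z T.nodePoly ^ 2 * g z) = 0 := by
  have hjump (i : ι) : aeval (T.jump i : ℂ) T.nodePoly = 0 := by
    have hfactor : ∏ j, ((T.jump i : ℂ) - T.jump j) = 0 :=
      Finset.prod_eq_zero (Finset.mem_univ i) (sub_self _)
    simp [nodePoly, map_prod, hfactor]
  have hzero : (fun z ↦ aeval z T.nodePoly ^ 2 * g z) =
      fun z ↦ z ^ 4 * ((∏ i, (z - (T.jump i : ℂ))) ^ 2 * g z) := by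
    ext z
    simp only [nodePoly, map_mul, map_pow, map_prod, map_sub, aeval_X, aeval_C,
      Complex.coe_algebraMap]
    ring
  have hsmooth : ContDiff ℂ 2 fun z ↦ (∏ i, (z - (T.jump i : ℂ))) ^ 2 * g z :=
    (by fun_prop : Differentiable ℂ _).contDiff
  simp only [functional, hjump]
  rw [← iteratedDeriv_one, hzero, iteratedDeriv_pow_mul_zero (by simp)
    (hsmooth.of_le one_le_two).contDiffAt, iteratedDeriv_pow_mul_zero (by simp) hsmooth.contDiffAt]
  simp

lemma exists_eq_eval_add_nodePoly_sq_mul {f : ℂ → ℂ} (hf : Differentiable ℂ f)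
    (hbdd : ∃ C, ∀ x : ℝ, ‖f x‖ ≤ C) :
    ∃ q : ℂ[X], q.natDegree ≤ 2 * Fintype.card ι + 4 ∧ ∃ g : ℂ → ℂ, Differentiable ℂ g ∧
      (∃ C, ∀ x : ℝ, ‖g x‖ ≤ C) ∧ ∀ z, f z = q.eval z + aeval z T.nodePoly ^ 2 * g z := by
  let s : Multiset ℝ := 0 ::ₘ 0 ::ₘ Finset.univ.val.map T.jump
  have hprod : (s.map fun a ↦ X - Polynomial.C a).prod = T.nodePoly := by
    simp [s, nodePoly, pow_two, mul_assoc]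
  obtain ⟨q, hq, g, hg, hgbdd, heq⟩ := exists_eq_eval_add_prod_mul (s + s) hf hbdd
  refine ⟨q, ?_, g, hg, hgbdd, ?_⟩
  · refine natDegree_le_of_degree_le (hq.le.trans (le_of_eq ?_))
    rw [Multiset.card_add, show s.card = Fintype.card ι + 2 by simp [s]]
    norm_cast
    ring
  · simpa [hprod, pow_two] using heq

section Limit

variable {T} {α : Type*} {l : Filter α} {ν : α → Measure ℝ} [∀ n, IsProbabilityMeasure (ν n)]
  {m : α → ℕ}

lemma tendsto_natCast_mul_integral_eval {N : ℕ} (hν : ∀ n, MemLp id N (ν n))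
    (hlim : ∀ j, 1 ≤ j → j ≤ N →
      Tendsto (fun n ↦ m n * ∫ x, x ^ j ∂(ν n)) l (𝓝 (T.cumulant j)))
    {q : ℂ[X]} (hq : q.natDegree ≤ N) (hq0 : q.eval 0 = 0) :
    Tendsto (fun n ↦ (m n : ℂ) * ∫ x : ℝ, q.eval (x : ℂ) ∂(ν n)) l
      (𝓝 (T.functional fun z ↦ q.eval z)) := by
  simp_rw [integral_eval_eq_sum (hν _) hq, functional_eval, Polynomial.sum_def, Finset.mul_sum]
  refine tendsto_finsetSum _ fun j hj ↦ ?_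
  have hj0 : j ≠ 0 := by
    rintro rfl
    exact mem_support_iff.1 hj (q.coeff_zero_eq_eval_zero.trans hq0)
  have hterm := (hlim j (Nat.one_le_iff_ne_zero.2 hj0) ((le_natDegree_of_mem_supp j hj).trans hq))
  simpa [mul_left_comm] using hterm.ofReal.const_mul (q.coeff j)

lemma aeval_nodePoly_sq_ofReal (x : ℝ) :
    aeval (x : ℂ) T.nodePoly ^ 2 = (T.nodePoly.eval x ^ 2 : ℝ) := by
  rw [Complex.ofReal_pow]
  exact congrArg (· ^ 2) (aeval_algebraMap_apply_eq_algebraMap_eval x T.nodePoly)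

lemma integrable_nodePoly_sq {ν : Measure ℝ} [IsFiniteMeasure ν]
    (hν : MemLp id ↑(2 * Fintype.card ι + 4) ν) :
    Integrable (fun x ↦ T.nodePoly.eval x ^ 2) ν := by
  have hdeg : ((T.nodePoly ^ 2).map (algebraMap ℝ ℂ)).natDegree ≤ 2 * Fintype.card ι + 4 := by
    rw [natDegree_map, natDegree_nodePoly_sq]
  have h := integrable_eval_of_memLp_id hν hdeg
  simp_rw [eval_map_algebraMap, map_pow, aeval_nodePoly_sq_ofReal] at h
  exact h.re

lemma tendsto_natCast_mul_integral_nodePoly_sq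
    (hν : ∀ n, MemLp id ↑(2 * Fintype.card ι + 4) (ν n))
    (hlim : ∀ j, 1 ≤ j → j ≤ 2 * Fintype.card ι + 4 →
      Tendsto (fun n ↦ m n * ∫ x, x ^ j ∂(ν n)) l (𝓝 (T.cumulant j))) :
    Tendsto (fun n ↦ m n * ∫ x, T.nodePoly.eval x ^ 2 ∂(ν n)) l (𝓝 0) := by
  let W : ℂ[X] := (T.nodePoly ^ 2).map (algebraMap ℝ ℂ)
  have hW (z : ℂ) : W.eval z = aeval z T.nodePoly ^ 2 := by
    rw [eval_map_algebraMap, map_pow]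
  have hdeg : W.natDegree ≤ 2 * Fintype.card ι + 4 := by
    rw [natDegree_map, natDegree_nodePoly_sq]
  have hfun : T.functional (fun z ↦ W.eval z) = 0 := by
    simpa [hW] using T.functional_nodePoly_sq_mul (differentiable_const (1 : ℂ))
  have h := tendsto_natCast_mul_integral_eval hν hlim hdeg (by simp [hW, nodePoly])
  simp_rw [hfun, hW, aeval_nodePoly_sq_ofReal, integral_complex_ofReal] at h
  rw [← Filter.tendsto_ofReal_iff]
  exact_mod_cast h

lemma tendsto_natCast_mul_integral (hν : ∀ n, MemLp id ↑(2 * Fintype.card ι + 4) (ν n))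
    (hlim : ∀ j, 1 ≤ j → j ≤ 2 * Fintype.card ι + 4 →
      Tendsto (fun n ↦ m n * ∫ x, x ^ j ∂(ν n)) l (𝓝 (T.cumulant j)))
    {f : ℂ → ℂ} (hf : Differentiable ℂ f) (hbdd : ∃ C, ∀ x : ℝ, ‖f x‖ ≤ C) (hf0 : f 0 = 0) :
    Tendsto (fun n ↦ (m n : ℂ) * ∫ x : ℝ, f x ∂(ν n)) l (𝓝 (T.functional f)) := by
  obtain ⟨q, hq, g, hg, ⟨C, hC⟩, heq⟩ := T.exists_eq_eval_add_nodePoly_sq_mul hf hbdd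
  have hq0 : q.eval 0 = 0 := by simpa [hf0, nodePoly] using (heq 0).symm
  have hmain := tendsto_natCast_mul_integral_eval hν hlim hq hq0
  have hremainder := tendsto_natCast_mul_integral_mul_of_bounded (fun x ↦ sq_nonneg _)
    (fun n ↦ integrable_nodePoly_sq (hν n)) (tendsto_natCast_mul_integral_nodePoly_sq hν hlim) hC
  have hfunctional : T.functional f = T.functional (fun z ↦ q.eval z) := by
    have hdiff := (T.nodePoly.differentiable_aeval (𝕜 := ℂ)).fun_pow 2 |>.fun_mul hg
    rw [funext heq, functional_add T q.differentiable hdiff, functional_nodePoly_sq_mul T hg,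
      add_zero]
  have hsplit (n : α) : ∫ x : ℝ, f x ∂(ν n) =
      ∫ x : ℝ, q.eval (x : ℂ) ∂(ν n) + ∫ x : ℝ, (T.nodePoly.eval x ^ 2 : ℝ) * g x ∂(ν n) := by
    have hgcont : Continuous fun x : ℝ ↦ g x := hg.continuous.comp Complex.continuous_ofReal
    simp_rw [heq, aeval_nodePoly_sq_ofReal]
    exact integral_add (integrable_eval_of_memLp_id (hν n) hq)
      ((integrable_nodePoly_sq (hν n)).ofReal.mul_bdd hgcont.aestronglyMeasurable (ae_of_all _ hC))
  simpa only [hsplit, mul_add, hfunctional, add_zero] using hmain.add hremainder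

lemma tendsto_natCast_mul_charFun_sub_one
    (hν : ∀ n, MemLp id ↑(2 * Fintype.card ι + 4) (ν n))
    (hlim : ∀ j, 1 ≤ j → j ≤ 2 * Fintype.card ι + 4 →
      Tendsto (fun n ↦ m n * ∫ x, x ^ j ∂(ν n)) l (𝓝 (T.cumulant j))) (u : ℝ) :
    Tendsto (fun n ↦ (m n : ℂ) * (charFun (ν n) u - 1)) l
      (𝓝 (T.exponent (u * Complex.I))) := by
  have hnorm (x : ℝ) : ‖Complex.exp (u * Complex.I * x)‖ = 1 := by
    rw [mul_right_comm, ← Complex.ofReal_mul, Complex.norm_exp_ofReal_mul_I]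
  have hbdd (x : ℝ) : ‖Complex.exp (u * Complex.I * x) - 1‖ ≤ 1 + 1 :=
    norm_sub_le_of_le (hnorm x).le norm_one.le
  have hcharFun (n : α) :
      ∫ x : ℝ, (Complex.exp (u * Complex.I * x) - 1) ∂(ν n) = charFun (ν n) u - 1 := by
    have hint : Integrable (fun x : ℝ ↦ Complex.exp (u * Complex.I * x)) (ν n) :=
      .of_bound (by fun_prop) 1 (ae_of_all _ fun x ↦ (hnorm x).le)
    rw [integral_sub hint (integrable_const 1), charFun_apply_real]
    simp [mul_right_comm]
  simpa only [hcharFun, functional_cexp_sub_one] using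
    tendsto_natCast_mul_integral hν hlim (f := fun z ↦ Complex.exp (u * Complex.I * z) - 1)
      (by fun_prop) ⟨_, hbdd⟩ (by simp)

end Limit

end Functional

end FiniteLevyTriplet

theorem moment_convergence_to_finite_levy_infdiv_law_general {ι : Type*} [Fintype ι]
    {T : FiniteLevyTriplet ι} {μ : Measure ℝ} [IsProbabilityMeasure μ] (hμ : T.IsLaw μ)
    {μs : ℕ → Measure ℝ} {m : ℕ → ℕ} (hm : Tendsto m atTop atTop) (hm0 : ∀ n, m n ≠ 0)
    (hroot : ∀ n, ∃ ν : Measure ℝ, IsProbabilityMeasure ν ∧ μs n = convPow ν (m n))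
    (hfin : ∀ n, Integrable (fun x ↦ x ^ (2 * Fintype.card ι + 4)) (μs n))
    (hmom : ∀ i, 1 ≤ i → i ≤ 2 * Fintype.card ι + 4 →
      Tendsto (fun n ↦ ∫ x, x ^ i ∂(μs n)) atTop (𝓝 (∫ x, x ^ i ∂μ))) :
    WeakConv μs μ := by
  choose ν hν hroot using hroot
  obtain rfl : μs = fun n ↦ convPow (ν n) (m n) := funext hroot
  have hmem (n : ℕ) : MemLp id ↑(2 * Fintype.card ι + 4) (ν n) :=
    memLp_id_of_convPow (hm0 n) <|
      (memLp_natCast_iff_integrable_pow aestronglyMeasurable_id _).2 (hfin n)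
  have hexp : 0 ∈ interior (integrableExpSet id μ) := by simp [hμ.integrableExpSet_id_eq_univ]
  have hcumulant (j : ℕ) (hj : 1 ≤ j) (hjN : j ≤ 2 * Fintype.card ι + 4) :
      Tendsto (fun n ↦ m n * ∫ x, x ^ j ∂(ν n)) atTop (𝓝 (T.cumulant j)) := by
    rw [← hμ.iteratedDeriv_cgf_id_zero (Nat.one_le_iff_ne_zero.1 hj)]
    exact tendsto_natCast_mul_integral_pow_of_convPow hexp hm hmem hmom hj hjN
  have hcharFun (u : ℝ) : Tendsto (fun n ↦ charFun (convPow (ν n) (m n)) u) atTop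
      (𝓝 (charFun μ u)) := by
    simpa [charFun_convPow, hμ u] using tendsto_one_add_pow_exp_of_tendsto_natCast_mul hm
      (FiniteLevyTriplet.tendsto_natCast_mul_charFun_sub_one hmem hcumulant u)
  have hweak := ProbabilityMeasure.tendsto_of_tendsto_charFun (μ₀ := ⟨μ, inferInstance⟩)
    (μ := fun n ↦ ⟨convPow (ν n) (m n), isProbabilityMeasure_convPow (ν n) (m n)⟩) hcharFun
  exact ProbabilityMeasure.tendsto_iff_forall_integral_tendsto.1 hweak

theorem moment_convergence_to_finite_levy_infdiv_law
    (γ : ℝ) (s : ℝ) (hs : 0 ≤ s)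
    (k : ℕ)
    (b : Fin k → ℝ) (hb : Function.Injective b) (hb0 : ∀ i, b i ≠ 0)
    (lam : Fin k → ℝ) (hlam : ∀ i, 0 < lam i)
    (μ : Measure ℝ) (hprob : IsProbabilityMeasure μ)
    (hchar : ∀ u : ℝ, charFn μ u =
      Complex.exp (Complex.I * (γ : ℂ) * (u : ℂ) - (s : ℂ) ^ 2 * (u : ℂ) ^ 2 / 2
        + ∑ i, (lam i : ℂ) * (Complex.exp (Complex.I * (u : ℂ) * (b i : ℂ)) - 1)))
    (μs : ℕ → Measure ℝ)
    (hprobs : ∀ n, IsProbabilityMeasure (μs n))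
    (hID : ∀ n, IsClassicallyInfDiv (μs n))
    (hfin : ∀ n, ∀ i : ℕ, i ≤ 2 * k + 4 → Integrable (fun x => x ^ i) (μs n))
    (hmom : ∀ i : ℕ, 1 ≤ i → i ≤ 2 * k + 4 →
      Tendsto (fun n => ∫ x, x ^ i ∂(μs n)) atTop (𝓝 (∫ x, x ^ i ∂μ))) :
    WeakConv μs μ := by
  have hlaw := FiniteLevyTriplet.isLaw_of_charFn_eq (fun i ↦ (hlam i).le) hchar
  refine moment_convergence_to_finite_levy_infdiv_law_general hlaw (tendsto_add_atTop_nat 1)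
    Nat.succ_ne_zero (fun n ↦ hID n (n + 1) n.succ_pos) ?_ ?_ <;> rw [Fintype.card_fin]
  exacts [fun n ↦ hfin n _ le_rfl, hmom]
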